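/- Under the compact nonzero-sum game setup with the quantization condition lim_{δ→0} ω_δ(2δ) = 0 and discount factor β ∈ (0,1): for every ε > 0 there exists δ(ε) > 0 such that for all 0 < δ ≤ δ(ε), any stationary perfect Nash equilibrium π*_δ of the finite δ-model, extended to X via Q_δ, is a stationary perfect ε-Nash equilibrium of the original game; that is, for every player i = 1,…,N and every x ∈ X, J^i(π*_δ; x) ≤ J*(π^{*,-i}_δ; x) + ε, where J*(π^{*,-i}_δ;·) is the discounted best-response value of player i (which equals the infimum over all policies of player i of the β-discounted expected cost against the extended policies π^{*,-i}_δ). -/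

import Mathlib

open MeasureTheory Filter Topology

noncomputable section

/-- Total variation distance between two measures:
`‖μ − ν‖_TV = 2 sup_{D measurable} |μ(D) − ν(D)|`. -/
def tvDist {α : Type*} [MeasurableSpace α] (μ ν : Measure α) : ℝ :=
  2 * ⨆ D : {D : Set α // MeasurableSet D}, |(μ D.1).toReal - (ν D.1).toReal|

/-- The normalized restriction `ν^z_δ` of `ν` to the quantization cell `Q⁻¹{z}`. -/
def cellMeasure {X : Type*} [MeasurableSpace X] (ν : Measure X) (Q : X → X) (z : X) :
    Measure X :=
  (ν (Q ⁻¹' {z}))⁻¹ • ν.restrict (Q ⁻¹' {z})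


theorem aux_restrict {Y : Type*} [MeasurableSpace Y] [MeasurableSingletonClass Y]
    (m : Measure Y) [IsProbabilityMeasure m] (S : Finset Y) (hS : m S = 1) :
    m.restrict (S : Set Y) = m :=
  Measure.restrict_eq_self_of_ae_mem ((mem_ae_iff_prob_eq_one S.measurableSet).2 hS)

theorem aux_integrable_fin {Y : Type*} [MeasurableSpace Y] [MeasurableSingletonClass Y]
    (m : Measure Y) [IsProbabilityMeasure m] (S : Finset Y) (hS : m S = 1) (f : Y → ℝ) :
    Integrable f m := by
  have h : IntegrableOn f (S : Set Y) m := IntegrableOn.finset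
  rwa [IntegrableOn, aux_restrict m S hS] at h

theorem aux_integral_fin {Y : Type*} [MeasurableSpace Y] [MeasurableSingletonClass Y]
    (m : Measure Y) [IsProbabilityMeasure m] (S : Finset Y) (hS : m S = 1) (f : Y → ℝ) :
    ∫ y, f y ∂m = ∑ b ∈ S, m.real {b} * f b := by
  have h := setIntegral_finset (μ := m) (f := f) S IntegrableOn.finset
  rw [aux_restrict m S hS] at h
  simpa using h

theorem aux_pi_update {N : ℕ} {A : Fin N → Type*} [∀ i, MeasurableSpace (A i)]
    (π : ∀ i, Measure (A i)) [∀ i, IsProbabilityMeasure (π i)] (i : Fin N) (a : A i) :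
    Measure.pi (Function.update π i (Measure.dirac a)) =
      (Measure.pi π).map (fun b => Function.update b i a) := by
  have hprob : ∀ j, IsProbabilityMeasure (Function.update π i (Measure.dirac a) j) := by
    intro j
    by_cases h : j = i
    · subst h
      simp only [Function.update_self]
      infer_instance
    · simp only [Function.update_of_ne h]
      infer_instance
  have hm : Measurable (fun b : ∀ j, A j => Function.update b i a) :=
    measurable_update_left
  refine Measure.pi_eq fun s hs => ?_
  rw [Measure.map_apply hm (MeasurableSet.univ_pi hs)]
  by_cases ha : a ∈ s i
  · have h1 : (fun b : ∀ j, A j => Function.update b i a) ⁻¹' (Set.univ.pi s) =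
        Set.univ.pi (Function.update s i Set.univ) := by
      ext b
      simp only [Set.mem_preimage, Set.mem_pi, Set.mem_univ, true_imp_iff]
      refine forall_congr' fun j => ?_
      by_cases h : j = i
      · subst h
        simp [ha]
      · simp [Function.update_of_ne h]
    rw [h1, Measure.pi_pi]
    refine Finset.prod_congr rfl fun j _ => ?_
    by_cases h : j = i
    · subst h
      simp [Measure.dirac_apply' _ (hs j), ha]
    · simp [Function.update_of_ne h]
  · have h1 : (fun b : ∀ j, A j => Function.update b i a) ⁻¹' (Set.univ.pi s) = ∅ := by
      ext b
      simp only [Set.mem_preimage, Set.mem_pi, Set.mem_univ, true_imp_iff,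
        Set.mem_empty_iff_false, iff_false]
      intro h
      apply ha
      simpa using h i
    rw [h1, measure_empty]
    symm
    apply Finset.prod_eq_zero (Finset.mem_univ i)
    simp [Measure.dirac_apply' _ (hs i), ha]

theorem aux_pi_supp {N : ℕ} {A : Fin N → Type*} [∀ i, MeasurableSpace (A i)]
    (π : ∀ i, Measure (A i)) [∀ i, IsProbabilityMeasure (π i)] (S : ∀ i, Finset (A i))
    (hS : ∀ i, π i (S i) = 1) : Measure.pi π (Fintype.piFinset S : Finset (∀ i, A i)) = 1 := by
  rw [Fintype.coe_piFinset, Measure.pi_pi]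
  simp [hS]

theorem aux_integral_update {N : ℕ} {A : Fin N → Type*} [∀ i, MeasurableSpace (A i)]
    [∀ i, MeasurableSingletonClass (A i)]
    (π : ∀ i, Measure (A i)) [∀ i, IsProbabilityMeasure (π i)] (S : ∀ i, Finset (A i))
    (hS : ∀ i, π i (S i) = 1) (i : Fin N) (a : A i) (f : (∀ i, A i) → ℝ) :
    ∫ b, f b ∂(Measure.pi (Function.update π i (Measure.dirac a))) =
      ∑ b ∈ Fintype.piFinset S, (Measure.pi π).real {b} * f (Function.update b i a) := by
  classical
  have hm : Measurable (fun b : ∀ j, A j => Function.update b i a) :=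
    measurable_update_left
  rw [aux_pi_update]
  have : IsProbabilityMeasure ((Measure.pi π).map (fun b => Function.update b i a)) :=
    Measure.isProbabilityMeasure_map hm.aemeasurable
  rw [integral_map hm.aemeasurable]
  · exact aux_integral_fin _ _ (aux_pi_supp π S hS) _
  · refine (aux_integrable_fin _
      ((Fintype.piFinset S).image (fun b => Function.update b i a)) ?_ f).aestronglyMeasurable
    rw [Measure.map_apply hm (Finset.measurableSet _)]
    refine le_antisymm prob_le_one ?_
    rw [← aux_pi_supp π S hS]
    refine measure_mono fun b hb => ?_
    simp only [Finset.coe_image, Set.mem_preimage]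
    exact Set.mem_image_of_mem _ hb

/-! ### Contraction and total variation -/

theorem aux_contract {X : Type*} [Nonempty X] (D : X → ℝ) (M β e : ℝ) (hβ1 : β < 1)
    (hD : ∀ x, D x ≤ M) (h : ∀ s, (∀ x, D x ≤ s) → ∀ x, D x ≤ β * s + e) (x : X) :
    D x ≤ e / (1 - β) := by
  have hb : BddAbove (Set.range D) := ⟨M, by rintro _ ⟨y, rfl⟩; exact hD y⟩
  have h1 : ⨆ y, D y ≤ β * (⨆ y, D y) + e := ciSup_le (h _ fun y => le_ciSup hb y)
  have h2 : D x ≤ ⨆ y, D y := le_ciSup hb x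
  rw [le_div_iff₀ (by linarith)]
  nlinarith

theorem aux_tv_bdd {α : Type*} [MeasurableSpace α] (μ ν : Measure α) [IsProbabilityMeasure μ]
    [IsProbabilityMeasure ν] (D : Set α) : |(μ D).toReal - (ν D).toReal| ≤ 1 := by
  have h1 : (μ D).toReal ≤ 1 := measureReal_le_one (μ := μ)
  have h2 : (ν D).toReal ≤ 1 := measureReal_le_one (μ := ν)
  have h3 : 0 ≤ (μ D).toReal := ENNReal.toReal_nonneg
  have h4 : 0 ≤ (ν D).toReal := ENNReal.toReal_nonneg
  rw [abs_le]; constructor <;> linarith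

theorem aux_tv_le_two {α : Type*} [MeasurableSpace α] (μ ν : Measure α) [IsProbabilityMeasure μ]
    [IsProbabilityMeasure ν] : tvDist μ ν ≤ 2 := by
  have : (⨆ D : {D : Set α // MeasurableSet D}, |(μ D.1).toReal - (ν D.1).toReal|) ≤ 1 :=
    have : Nonempty {D : Set α // MeasurableSet D} := ⟨⟨∅, MeasurableSet.empty⟩⟩
    ciSup_le fun D => aux_tv_bdd μ ν D.1
  unfold tvDist
  linarith

theorem aux_tv_ge {α : Type*} [MeasurableSpace α] (μ ν : Measure α) [IsProbabilityMeasure μ]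
    [IsProbabilityMeasure ν] (D : Set α) (hD : MeasurableSet D) :
    2 * |μ.real D - ν.real D| ≤ tvDist μ ν := by
  have hb : BddAbove (Set.range fun D : {D : Set α // MeasurableSet D} =>
      |(μ D.1).toReal - (ν D.1).toReal|) :=
    ⟨1, by rintro _ ⟨y, rfl⟩; exact aux_tv_bdd μ ν y.1⟩
  have := le_ciSup hb ⟨D, hD⟩
  unfold tvDist
  simp only [Measure.real]
  linarith

theorem aux_tv_integral_fin {α : Type*} [MeasurableSpace α] [MeasurableSingletonClass α]
    (μ ν : Measure α) [IsProbabilityMeasure μ] [IsProbabilityMeasure ν] (S : Finset α)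
    (hμ : μ S = 1) (hν : ν S = 1) (f : α → ℝ) (K : ℝ) (hK : ∀ x, |f x| ≤ K) :
    |∫ x, f x ∂μ - ∫ x, f x ∂ν| ≤ K * tvDist μ ν := by
  classical
  rw [aux_integral_fin μ S hμ, aux_integral_fin ν S hν, ← Finset.sum_sub_distrib]
  have h1 : ∀ b ∈ S, |μ.real {b} * f b - ν.real {b} * f b| ≤ K * |μ.real {b} - ν.real {b}| := by
    intro b _
    rw [← sub_mul, abs_mul, mul_comm]
    exact mul_le_mul_of_nonneg_right (hK b) (abs_nonneg _)
  refine (Finset.abs_sum_le_sum_abs _ _).trans ((Finset.sum_le_sum h1).trans ?_)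
  rw [← Finset.mul_sum]
  by_cases hS : S.Nonempty
  swap
  · rw [Finset.not_nonempty_iff_eq_empty] at hS
    simp [hS] at hμ
  obtain ⟨z, -⟩ := hS
  refine mul_le_mul_of_nonneg_left ?_ ((abs_nonneg _).trans (hK z))
  rw [← Finset.sum_filter_add_sum_filter_not S (fun b => ν.real {b} ≤ μ.real {b})]
  have e1 : ∑ b ∈ S with ν.real {b} ≤ μ.real {b}, |μ.real {b} - ν.real {b}| =
      μ.real (S.filter (fun b => ν.real {b} ≤ μ.real {b}) : Finset α) -
      ν.real (S.filter (fun b => ν.real {b} ≤ μ.real {b}) : Finset α) := by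
    rw [← sum_measureReal_singleton, ← sum_measureReal_singleton, ← Finset.sum_sub_distrib]
    refine Finset.sum_congr rfl fun b hb => abs_of_nonneg ?_
    have := (Finset.mem_filter.1 hb).2
    linarith
  have e2 : ∑ b ∈ S with ¬ ν.real {b} ≤ μ.real {b}, |μ.real {b} - ν.real {b}| =
      ν.real (S.filter (fun b => ¬ ν.real {b} ≤ μ.real {b}) : Finset α) -
      μ.real (S.filter (fun b => ¬ ν.real {b} ≤ μ.real {b}) : Finset α) := by
    rw [← sum_measureReal_singleton, ← sum_measureReal_singleton, ← Finset.sum_sub_distrib]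
    refine Finset.sum_congr rfl fun b hb => ?_
    have := (Finset.mem_filter.1 hb).2
    rw [abs_of_neg (by linarith)]
    ring
  rw [e1, e2]
  have g1 := aux_tv_ge μ ν _ (S.filter (fun b => ν.real {b} ≤ μ.real {b})).measurableSet
  have g2 := aux_tv_ge μ ν _ (S.filter (fun b => ¬ ν.real {b} ≤ μ.real {b})).measurableSet
  have a1 := le_abs_self (μ.real (S.filter (fun b => ν.real {b} ≤ μ.real {b}) : Finset α) -
      ν.real (S.filter (fun b => ν.real {b} ≤ μ.real {b}) : Finset α))
  have a2 := neg_abs_le (μ.real (S.filter (fun b => ¬ ν.real {b} ≤ μ.real {b}) : Finset α) -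
      ν.real (S.filter (fun b => ¬ ν.real {b} ≤ μ.real {b}) : Finset α))
  linarith

/-- A function factoring through a quantizer with finitely many values is measurable. -/
theorem aux_quant_measurable {X : Type*} [MeasurableSpace X] [MeasurableSingletonClass X]
    (Q : X → X) (hQ : Measurable Q) (S : Finset X) (hS : ∀ x, Q x ∈ S) (f : X → ℝ)
    (hf : ∀ x, f x = f (Q x)) : Measurable f := by
  intro B _
  have : f ⁻¹' B = Q ⁻¹' ((S : Set X) ∩ f ⁻¹' B) := by
    ext x
    simp only [Set.mem_preimage, Set.mem_inter_iff, Finset.mem_coe, hS x, true_and]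
    rw [hf x]
  rw [this]
  exact hQ ((S.finite_toSet.inter_of_left _).measurableSet)

theorem aux_tv_integral {X : Type*} [MeasurableSpace X] [MeasurableSingletonClass X]
    (μ ν : Measure X) [IsProbabilityMeasure μ] [IsProbabilityMeasure ν]
    (Q : X → X) (hQ : Measurable Q) (S : Finset X) (hS : ∀ x, Q x ∈ S) (f : X → ℝ)
    (hf : ∀ x, f x = f (Q x)) (K : ℝ) (hK : ∀ x, |f x| ≤ K) :
    |∫ x, f x ∂μ - ∫ x, f x ∂ν| ≤ K * tvDist (μ.map Q) (ν.map Q) := by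
  have hfm := aux_quant_measurable Q hQ S hS f hf
  have key : ∀ m : Measure X, ∫ x, f x ∂m = ∫ x, f x ∂(m.map Q) := by
    intro m
    rw [integral_map hQ.aemeasurable hfm.aestronglyMeasurable]
    exact integral_congr_ae (Eventually.of_forall hf)
  have supp : ∀ m : Measure X, IsProbabilityMeasure m → m.map Q S = 1 := by
    intro m _
    rw [Measure.map_apply hQ S.measurableSet]
    have : Q ⁻¹' (S : Set X) = Set.univ := by ext x; simp [hS x]
    rw [this, measure_univ]
  rw [key μ, key ν]
  have := Measure.isProbabilityMeasure_map (μ := μ) hQ.aemeasurable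
  have := Measure.isProbabilityMeasure_map (μ := ν) hQ.aemeasurable
  exact aux_tv_integral_fin _ _ S (supp μ inferInstance) (supp ν inferInstance) f K hK

/-! ### Setwise continuity and measurability -/

theorem aux_setwise_continuous {X Y : Type*} [MeasurableSpace X] [TopologicalSpace Y]
    (P : Y → Measure X) (hP : ∀ q, IsProbabilityMeasure (P q))
    (hset : ∀ D, MeasurableSet D → Continuous fun q => (P q D).toReal)
    (f : X → ℝ) (hf : Measurable f) (K : ℝ) (hK : ∀ x, |f x| ≤ K) :
    Continuous fun q => ∫ x, f x ∂(P q) := by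
  refine continuous_of_uniform_approx_of_continuous fun u hu => ?_
  obtain ⟨ε, hε, hεu⟩ := Metric.mem_uniformity_dist.1 hu
  -- floor approximation at scale `η`
  set η := ε / 2 with hη
  have hη0 : 0 < η := by positivity
  let k : X → ℤ := fun x => ⌊f x / η⌋
  have hk : Measurable k := (hf.div_const η).floor
  let T : Finset ℤ := Finset.Icc ⌊-K / η⌋ ⌊K / η⌋
  have hkT : ∀ x, k x ∈ T := by
    intro x
    have := abs_le.1 (hK x)
    refine Finset.mem_Icc.2 ⟨Int.floor_le_floor ?_, Int.floor_le_floor ?_⟩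
    · exact div_le_div_of_nonneg_right this.1 hη0.le
    · exact div_le_div_of_nonneg_right this.2 hη0.le
  have hbd : ∀ x, |f x - (k x : ℝ) * η| ≤ η := by
    intro x
    have h1 : (k x : ℝ) ≤ f x / η := Int.floor_le _
    have h2 : f x / η < k x + 1 := Int.lt_floor_add_one _
    rw [le_div_iff₀ hη0] at h1
    rw [div_lt_iff₀ hη0] at h2
    rw [abs_le]; constructor <;> nlinarith
  refine ⟨fun q => ∑ t ∈ T, (P q (k ⁻¹' {t})).toReal * ((t : ℝ) * η), ?_, ?_⟩
  · exact continuous_finsetSum _ fun t _ =>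
      (hset _ (hk (MeasurableSet.singleton t))).mul continuous_const
  · intro q
    apply hεu
    have hprob := hP q
    have hprobm := Measure.isProbabilityMeasure_map (μ := P q) hk.aemeasurable
    have hs : (P q).map k T = 1 := by
      rw [Measure.map_apply hk T.measurableSet]
      have : k ⁻¹' (T : Set ℤ) = Set.univ := by ext x; simp [hkT x]
      rw [this, measure_univ]
    have h1 : ∫ x, (k x : ℝ) * η ∂(P q) =
        ∑ t ∈ T, (P q (k ⁻¹' {t})).toReal * ((t : ℝ) * η) := by
      have h2 := aux_integral_fin ((P q).map k) T hs (fun t => (t : ℝ) * η)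
      rw [integral_map hk.aemeasurable
        (measurable_from_top (f := fun t : ℤ => (t : ℝ) * η)).aestronglyMeasurable] at h2
      rw [h2]
      refine Finset.sum_congr rfl fun t _ => ?_
      rw [Measure.real, Measure.map_apply hk (MeasurableSet.singleton t)]
    beta_reduce
    rw [← h1, Real.dist_eq]
    have hfi : Integrable f (P q) :=
      Integrable.of_bound hf.aestronglyMeasurable K (Eventually.of_forall hK)
    have hdm : Measurable (fun x => f x - (k x : ℝ) * η) :=
      hf.sub ((measurable_from_top (f := fun t : ℤ => (t : ℝ) * η)).comp hk)
    have hdi : Integrable (fun x => f x - (k x : ℝ) * η) (P q) :=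
      Integrable.of_bound hdm.aestronglyMeasurable η (Eventually.of_forall hbd)
    have hgi : Integrable (fun x => (k x : ℝ) * η) (P q) := by
      have := hfi.sub hdi
      refine this.congr (Eventually.of_forall fun x => ?_)
      simp
    rw [← integral_sub hfi hgi]
    have := norm_integral_le_of_norm_le_const (μ := P q)
      (f := fun x => f x - (k x : ℝ) * η) (Eventually.of_forall hbd)
    simp only [probReal_univ, mul_one, Real.norm_eq_abs] at this
    linarith

/-- A common lower envelope for a setwise continuous family. -/
theorem aux_envelope {X Y : Type*} [MeasurableSpace X] [TopologicalSpace Y]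
    [TopologicalSpace.SeparableSpace Y] [Nonempty Y]
    (P : Y → Measure X) (hP : ∀ q, IsProbabilityMeasure (P q))
    (hset : ∀ D, MeasurableSet D → Continuous fun q => (P q D).toReal)
    (F : X → ENNReal) (K : ENNReal) (hKtop : K ≠ ⊤) (hK : ∀ x, F x ≤ K) :
    ∃ u : X → ENNReal, Measurable u ∧ (∀ x, u x ≤ F x) ∧
      ∀ φ : X → ENNReal, Measurable φ → (∀ x, φ x ≤ F x) → ∀ q, ∀ᵐ x ∂(P q), φ x ≤ u x := by
  let s := TopologicalSpace.denseSeq Y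
  choose v hvm hvF hvi using fun n => exists_measurable_le_lintegral_eq (P (s n)) F
  refine ⟨fun x => ⨆ n, v n x, Measurable.iSup hvm, fun x => iSup_le fun n => hvF n x, ?_⟩
  intro φ hφ hφF
  have hu : Measurable fun x => ⨆ n, v n x := Measurable.iSup hvm
  have hmeas : MeasurableSet {x | ¬ φ x ≤ ⨆ n, v n x} := (measurableSet_le hφ hu).compl
  have hzero : ∀ n, P (s n) {x | ¬ φ x ≤ ⨆ n, v n x} = 0 := by
    intro n
    have hpr := hP (s n)
    have hfin : ∫⁻ x, v n x ∂(P (s n)) ≠ ⊤ := by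
      refine ne_of_lt (lt_of_le_of_lt (lintegral_mono fun x => (hvF n x).trans (hK x)) ?_)
      simpa using hKtop.lt_top
    have h1 : v n =ᵐ[P (s n)] fun x => max (v n x) (φ x) := by
      refine ae_eq_of_ae_le_of_lintegral_le (Eventually.of_forall fun x => le_max_left _ _) hfin
        ((hvm n).max hφ).aemeasurable ?_
      rw [← hvi n]
      exact lintegral_mono fun x => max_le (hvF n x) (hφF x)
    have h2 : ∀ᵐ x ∂(P (s n)), φ x ≤ ⨆ n, v n x := by
      filter_upwards [h1] with x hx
      refine le_trans ?_ (le_iSup (fun n => v n x) n)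
      rw [hx]; exact le_max_right _ _
    exact ae_iff.1 h2
  intro q
  rw [ae_iff]
  have hcont := hset _ hmeas
  have hz : (fun q => (P q {x | ¬ φ x ≤ ⨆ n, v n x}).toReal) = fun _ => 0 := by
    refine Continuous.ext_on (TopologicalSpace.denseRange_denseSeq Y) hcont continuous_const ?_
    rintro _ ⟨n, rfl⟩
    simp [s] at hzero
    simp [hzero n]
  have := congrFun hz q
  have hpr := hP q
  exact (measureReal_eq_zero_iff (μ := P q)).1 this

theorem aux_approx {X Y : Type*} [MeasurableSpace X] [TopologicalSpace Y]
    [TopologicalSpace.SeparableSpace Y] [Nonempty Y]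
    (P : Y → Measure X) (hP : ∀ q, IsProbabilityMeasure (P q))
    (hset : ∀ D, MeasurableSet D → Continuous fun q => (P q D).toReal)
    (J : X → ℝ) (M : ℝ) (hM : ∀ x, |J x| ≤ M) :
    ∃ g : ℕ → Y → ℝ, (∀ n, Continuous (g n)) ∧
      ∀ q, Tendsto (fun n => g n q) atTop (𝓝 (∫ x, J x ∂(P q))) := by
  have hlo : ∀ x, 0 ≤ J x + M := fun x => by linarith [(abs_le.1 (hM x)).1]
  have hhi : ∀ x, 0 ≤ M - J x := fun x => by linarith [(abs_le.1 (hM x)).2]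
  obtain ⟨u, hum, huF, hu⟩ := aux_envelope P hP hset (fun x => ENNReal.ofReal (J x + M))
    (ENNReal.ofReal (2 * M)) ENNReal.ofReal_ne_top
    (fun x => ENNReal.ofReal_le_ofReal (by linarith [hhi x]))
  obtain ⟨v, hvm, hvF, hv⟩ := aux_envelope P hP hset (fun x => ENNReal.ofReal (M - J x))
    (ENNReal.ofReal (2 * M)) ENNReal.ofReal_ne_top
    (fun x => ENNReal.ofReal_le_ofReal (by linarith [hlo x]))
  have hu' : ∀ x, (u x).toReal ≤ J x + M := fun x => by
    have := ENNReal.toReal_mono ENNReal.ofReal_ne_top (huF x)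
    rwa [ENNReal.toReal_ofReal (hlo x)] at this
  have hv' : ∀ x, (v x).toReal ≤ M - J x := fun x => by
    have := ENNReal.toReal_mono ENNReal.ofReal_ne_top (hvF x)
    rwa [ENNReal.toReal_ofReal (hhi x)] at this
  have hut : ∀ x, u x ≠ ⊤ := fun x => ne_top_of_le_ne_top ENNReal.ofReal_ne_top (huF x)
  have hvt : ∀ x, v x ≠ ⊤ := fun x => ne_top_of_le_ne_top ENNReal.ofReal_ne_top (hvF x)
  let D : Set X := {x | ¬ 2 * M ≤ (u x).toReal + (v x).toReal}
  have hD : MeasurableSet D :=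
    (measurableSet_le measurable_const (hum.ennreal_toReal.add hvm.ennreal_toReal)).compl
  let J0 : X → ℝ := fun x => (u x).toReal - M
  have hJ0m : Measurable J0 := hum.ennreal_toReal.sub_const M
  have hJ0b : ∀ x, |J0 x| ≤ M := by
    intro x
    have h0 : 0 ≤ (u x).toReal := ENNReal.toReal_nonneg
    have h1 := hu' x
    have h2 := abs_le.1 (hM x)
    simp only [J0]
    rw [abs_le]; constructor <;> linarith
  -- on the good set
  have hgood : ∀ q, P q D = 0 → ∫ x, J x ∂(P q) = ∫ x, J0 x ∂(P q) := by
    intro q hq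
    have : ∀ᵐ x ∂(P q), 2 * M ≤ (u x).toReal + (v x).toReal := ae_iff.2 hq
    refine integral_congr_ae ?_
    filter_upwards [this] with x hx
    simp only [J0]
    linarith [hu' x, hv' x]
  have hbad : ∀ q, P q D ≠ 0 → ∫ x, J x ∂(P q) = 0 := by
    intro q hq
    refine integral_undef fun hint => hq ?_
    obtain ⟨J', hJ'm, hJ'⟩ := hint.aestronglyMeasurable
    have hJ'm' : Measurable J' := hJ'm.measurable
    obtain ⟨Z, hZs, hZm, hZ⟩ := exists_measurable_superset_of_null (ae_iff.1 hJ')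
    have hZc : ∀ x, x ∉ Z → J x = J' x := fun x hx => by
      by_contra hne
      exact hx (hZs hne)
    have hZae : ∀ᵐ x ∂(P q), x ∉ Z := measure_eq_zero_iff_ae_notMem.1 hZ
    have e1 := hu (Zᶜ.indicator fun x => ENNReal.ofReal (J' x + M))
      ((hJ'm'.add_const M).ennreal_ofReal.indicator hZm.compl) (fun x => by
        by_cases hx : x ∈ Z
        · simp [hx]
        · simp [hx, hZc x hx]) q
    have e2 := hv (Zᶜ.indicator fun x => ENNReal.ofReal (M - J' x))
      ((hJ'm'.const_sub M).ennreal_ofReal.indicator hZm.compl) (fun x => by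
        by_cases hx : x ∈ Z
        · simp [hx]
        · simp [hx, hZc x hx]) q
    have e3 : ∀ᵐ x ∂(P q), 2 * M ≤ (u x).toReal + (v x).toReal := by
      filter_upwards [hZae, e1, e2] with x hx h1 h2
      have hx' : x ∈ Zᶜ := hx
      rw [Set.indicator_of_mem hx', ← hZc x hx] at h1 h2
      have h1' := (ENNReal.ofReal_le_iff_le_toReal (hut x)).1 h1
      have h2' := (ENNReal.ofReal_le_iff_le_toReal (hvt x)).1 h2
      linarith
    exact ae_iff.1 e3
  refine ⟨fun n q => (∫ x, J0 x ∂(P q)) * max 0 (1 - n * (P q D).toReal), fun n => ?_, fun q => ?_⟩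
  · exact (aux_setwise_continuous P hP hset J0 hJ0m M hJ0b).mul
      (continuous_const.max (continuous_const.sub (continuous_const.mul (hset D hD))))
  · by_cases hq : P q D = 0
    · simp only [hq, hgood q hq, ENNReal.toReal_zero, mul_zero, sub_zero]
      simp
    · rw [hbad q hq]
      have hpr := hP q
      have hpos : 0 < (P q D).toReal := ENNReal.toReal_pos hq (measure_ne_top _ _)
      refine tendsto_const_nhds.congr' ?_
      obtain ⟨n0, hn0⟩ := exists_nat_gt (1 / (P q D).toReal)
      filter_upwards [eventually_ge_atTop n0] with n hn
      have h1 : (1:ℝ) < n0 * (P q D).toReal := by rwa [div_lt_iff₀ hpos] at hn0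
      have h2 : (n0 : ℝ) * (P q D).toReal ≤ n * (P q D).toReal :=
        mul_le_mul_of_nonneg_right (by exact_mod_cast hn) hpos.le
      rw [max_eq_left (by linarith), mul_zero]

theorem aux_inf_measurable {X B : Type*} [TopologicalSpace X] [T2Space X] [CompactSpace X]
    [MeasurableSpace X]
    [BorelSpace X] [TopologicalSpace B] [CompactSpace B] [Nonempty B]
    (h : X → B → ℝ) (g : ℕ → X × B → ℝ) (hg : ∀ n, Continuous (g n))
    (hlim : ∀ x a, Tendsto (fun n => g n (x, a)) atTop (𝓝 (h x a)))
    (hb : ∀ x, BddBelow (Set.range (h x))) : Measurable fun x => ⨅ a, h x a := by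
  refine measurable_of_Iio fun r => ?_
  have : (fun x => ⨅ a, h x a) ⁻¹' Set.Iio r =
      ⋃ m : ℕ, ⋃ k : ℕ, Prod.fst '' (⋂ n : ℕ, ⋂ _ : k ≤ n,
        {q : X × B | g n q ≤ r - 1 / ((m : ℝ) + 1)}) := by
    ext x
    simp only [Set.mem_preimage, Set.mem_Iio, ciInf_lt_iff (hb x), Set.mem_iUnion, Set.mem_image,
      Set.mem_iInter, Set.mem_ofPred_eq, Prod.exists, exists_and_right, exists_eq_right]
    constructor
    · rintro ⟨a, ha⟩
      obtain ⟨m, hm⟩ := exists_nat_one_div_lt (sub_pos.2 ha)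
      have h1 : h x a < r - 1 / ((m : ℝ) + 1) := by linarith
      have h2 := (hlim x a).eventually (eventually_lt_nhds h1)
      obtain ⟨k, hk⟩ := eventually_atTop.1 h2
      exact ⟨m, k, a, fun n hn => (hk n hn).le⟩
    · rintro ⟨m, k, a, hk⟩
      refine ⟨a, ?_⟩
      have h1 : h x a ≤ r - 1 / ((m : ℝ) + 1) :=
        le_of_tendsto (hlim x a) (eventually_atTop.2 ⟨k, hk⟩)
      have h2 : (0:ℝ) < 1 / ((m : ℝ) + 1) := by positivity
      linarith
  rw [this]
  refine MeasurableSet.iUnion fun m => MeasurableSet.iUnion fun k => ?_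
  refine IsClosed.measurableSet (IsCompact.isClosed (IsCompact.image ?_ continuous_fst))
  exact (isClosed_iInter fun n => isClosed_iInter fun _ =>
    isClosed_le (hg n) continuous_const).isCompact

/-! ### The one-step operator -/

/-- One-step cost operator for a finitely supported randomized joint action. -/
def auxL {X Y : Type*} [MeasurableSpace X] (T : Finset Y) (w : Y → ℝ) (c : X → Y → ℝ) (β : ℝ)
    (p : X → Y → Measure X) (J : X → ℝ) (x : X) (u : Y → Y) : ℝ :=
  ∑ b ∈ T, w b * (c x (u b) + β * ∫ y, J y ∂(p x (u b)))

theorem auxL_le {X Y : Type*} [MeasurableSpace X] (T : Finset Y) (w : Y → ℝ)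
    (hw0 : ∀ b, 0 ≤ w b) (hw1 : ∑ b ∈ T, w b = 1) (c : X → Y → ℝ) (β : ℝ)
    (p : X → Y → Measure X) (J J' : X → ℝ) (x x' : X) (u u' : Y → Y) (e : ℝ)
    (h : ∀ b, c x (u b) + β * ∫ y, J y ∂(p x (u b)) ≤
      c x' (u' b) + β * ∫ y, J' y ∂(p x' (u' b)) + e) :
    auxL T w c β p J x u ≤ auxL T w c β p J' x' u' + e := by
  unfold auxL
  calc _ ≤ ∑ b ∈ T, w b * ((c x' (u' b) + β * ∫ y, J' y ∂(p x' (u' b))) + e) :=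
        Finset.sum_le_sum fun b _ => mul_le_mul_of_nonneg_left (h b) (hw0 b)
    _ = _ := by
        simp only [mul_add _ _ e, Finset.sum_add_distrib, ← Finset.sum_mul, hw1, one_mul]

theorem aux_int_abs {X : Type*} [MeasurableSpace X] (m : Measure X) [IsProbabilityMeasure m]
    (J : X → ℝ) (M : ℝ) (h : ∀ x, |J x| ≤ M) : |∫ x, J x ∂m| ≤ M := by
  have := norm_integral_le_of_norm_le_const (μ := m) (f := J) (Eventually.of_forall h)
  simpa using this

theorem auxL_abs {X Y : Type*} [MeasurableSpace X] (T : Finset Y) (w : Y → ℝ)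
    (hw0 : ∀ b, 0 ≤ w b) (hw1 : ∑ b ∈ T, w b = 1) (c : X → Y → ℝ) (β : ℝ) (hβ : 0 < β)
    (p : X → Y → Measure X) (hp : ∀ x a, IsProbabilityMeasure (p x a))
    (C : ℝ) (hC : ∀ x a, |c x a| ≤ C) (J : X → ℝ) (M : ℝ)
    (hM : ∀ x, |J x| ≤ M) (x : X) (u : Y → Y) :
    |auxL T w c β p J x u| ≤ β * M + C := by
  unfold auxL
  calc _ ≤ ∑ b ∈ T, |w b * (c x (u b) + β * ∫ y, J y ∂(p x (u b)))| :=
        Finset.abs_sum_le_sum_abs _ _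
    _ ≤ ∑ b ∈ T, w b * (β * M + C) := by
        refine Finset.sum_le_sum fun b _ => ?_
        rw [abs_mul, abs_of_nonneg (hw0 b)]
        refine mul_le_mul_of_nonneg_left ?_ (hw0 b)
        have hpr := hp x (u b)
        have h1 := aux_int_abs (p x (u b)) J M hM
        have h2 := hC x (u b)
        have h3 := abs_add_le (c x (u b)) (β * ∫ y, J y ∂(p x (u b)))
        rw [abs_mul, abs_of_pos hβ] at h3
        nlinarith
    _ = _ := by rw [← Finset.sum_mul, hw1, one_mul]

theorem aux_piecewise {X : Type*} [MeasurableSpace X] [MeasurableSingletonClass X]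
    (Q : X → X) (hQ : Measurable Q) (S : Finset X) (hS : ∀ x, Q x ∈ S)
    (F : X → X → ℝ) (hF : ∀ z ∈ S, Measurable (F z)) (f : X → ℝ) (hf : ∀ x, f x = F (Q x) x) :
    Measurable f := by
  classical
  have : f = fun x => ∑ z ∈ S, if Q x = z then F z x else 0 := by
    funext x
    rw [Finset.sum_ite_eq, if_pos (hS x), hf x]
  rw [this]
  exact Finset.measurable_sum S fun z hz =>
    Measurable.ite (hQ (MeasurableSet.singleton z)) (hF z hz) measurable_const

theorem aux_core {X Y B : Type*} [MetricSpace X] [CompactSpace X] [Nonempty X]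
    [MeasurableSpace X] [BorelSpace X] [MetricSpace Y] [CompactSpace Y] [Nonempty Y]
    [MetricSpace B] [CompactSpace B] [Nonempty B]
    (up : B → Y → Y) (hup : ∀ b, Continuous fun a => up a b)
    (hupd : ∀ a a' b, dist (up a b) (up a' b) ≤ dist a a')
    (c : X → Y → ℝ) (hc : Continuous fun q : X × Y => c q.1 q.2)
    (C : ℝ) (hC : ∀ x a, |c x a| ≤ C)
    (p : X → Y → Measure X) (hp : ∀ x a, IsProbabilityMeasure (p x a))
    (hset : ∀ D : Set X, MeasurableSet D → Continuous fun q : X × Y => (p q.1 q.2 D).toReal)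
    (β : ℝ) (hβ0 : 0 < β) (hβ1 : β < 1)
    (S : Finset X) (Q : X → X) (hS : ∀ x, Q x ∈ S) (hQ : Measurable Q)
    (δ : ℝ) (hδ : 0 < δ) (hQd : ∀ x, dist x (Q x) ≤ δ)
    (Ab : Finset B) (hAb : ∀ a, ∃ b ∈ Ab, dist a b ≤ δ)
    (κ : X → Measure X) (hκ : ∀ z ∈ S, IsProbabilityMeasure (κ z))
    (hκ' : ∀ z ∈ S, ∀ᵐ x ∂(κ z), Q x = z)
    (e₁ ω : ℝ)
    (he₁ : ∀ x y a b, dist x y + dist a b ≤ 2 * δ → |c x a - c y b| ≤ e₁)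
    (hω : ∀ x y a b, dist x y + dist a b ≤ 2 * δ →
      tvDist ((p x a).map Q) ((p y b).map Q) ≤ ω)
    (T : Finset Y) (W : X → Y → ℝ) (hW0 : ∀ x b, 0 ≤ W x b) (hW1 : ∀ x, ∑ b ∈ T, W x b = 1)
    (hWQ : ∀ x, W x = W (Q x))
    (Jd Js Ji : X → ℝ) (hJd : ∀ x, Jd x = Jd (Q x))
    (hJd1 : ∀ z ∈ S, Jd z = sInf {v : ℝ | ∃ a ∈ Ab, v =
      ∫ x, auxL T (W z) c β p Jd x (up a) ∂(κ z)})
    (hJd2 : ∀ z ∈ S, Jd z = ∫ x, auxL T (W z) c β p Jd x id ∂(κ z))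
    (Ms : ℝ) (hMs : ∀ x, |Js x| ≤ Ms)
    (hJs : ∀ x, Js x = ⨅ a, auxL T (W x) c β p Js x (up a))
    (Mi : ℝ) (hMi : ∀ x, |Ji x| ≤ Mi)
    (hJi : ∀ x, Ji x = auxL T (W x) c β p Ji x id) (x : X) :
    Ji x ≤ Js x + 3 * (e₁ + β * (C / (1 - β) * ω)) / (1 - β) := by
  have hp' : ∀ q : X × Y, IsProbabilityMeasure (p q.1 q.2) := fun q => hp _ _
  -- measurability of the value functions
  have hJim : Measurable Ji := by
    obtain ⟨g, hg, hlim⟩ := aux_approx (fun q : X × Y => p q.1 q.2) hp' hset Ji Mi hMi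
    refine aux_piecewise Q hQ S hS (fun z x => auxL T (W z) c β p Ji x id) (fun z _ => ?_) Ji
      (fun x => by rw [hJi x, hWQ x])
    refine Finset.measurable_sum T fun b _ => Measurable.const_mul (Measurable.add ?_
      (Measurable.const_mul ?_ _)) _
    · exact (hc.comp (Continuous.prodMk_left b)).measurable
    · refine measurable_of_tendsto_metrizable (f := fun n x => g n (x, b))
        (fun n => ((hg n).comp (Continuous.prodMk_left b)).measurable)
        (tendsto_pi_nhds.2 fun x => hlim (x, b))
  have hJsm : Measurable Js := by
    obtain ⟨g, hg, hlim⟩ := aux_approx (fun q : X × Y => p q.1 q.2) hp' hset Js Ms hMs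
    refine aux_piecewise Q hQ S hS (fun z x => ⨅ a, auxL T (W z) c β p Js x (up a))
      (fun z _ => ?_) Js (fun x => by rw [hJs x, hWQ x])
    refine aux_inf_measurable _
      (fun n q => ∑ b ∈ T, W z b * (c q.1 (up q.2 b) + β * g n (q.1, up q.2 b)))
      (fun n => ?_) (fun x a => ?_) (fun x => ?_)
    · refine continuous_finsetSum _ fun b _ => ?_
      have h1 : Continuous fun q : X × B => (q.1, up q.2 b) :=
        continuous_fst.prodMk ((hup b).comp continuous_snd)
      exact continuous_const.mul ((hc.comp h1).add (continuous_const.mul ((hg n).comp h1)))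
    · exact tendsto_finsetSum _ fun b _ => ((hlim (x, up a b)).const_mul β |>.const_add _).const_mul _
    · refine ⟨-(β * Ms + C), ?_⟩
      rintro _ ⟨a, rfl⟩
      exact (abs_le.1 (auxL_abs T (W z) (hW0 z) (hW1 z) c β hβ0 p hp C hC Js Ms hMs x (up a))).1
  have hJdm : Measurable Jd := aux_quant_measurable Q hQ S hS Jd hJd
  -- bound on `Jd`
  obtain ⟨M0, hM0⟩ : ∃ M0, ∀ x, |Jd x| ≤ M0 := by
    refine ⟨∑ z ∈ S, |Jd z|, fun x => ?_⟩
    rw [hJd x]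
    exact Finset.single_le_sum (f := fun z => |Jd z|) (fun _ _ => abs_nonneg _) (hS x)
  have hK : ∀ x, |Jd x| ≤ C / (1 - β) := by
    refine aux_contract (fun x => |Jd x|) M0 β C hβ1 hM0 fun s hs x => ?_
    beta_reduce
    rw [hJd x, hJd2 _ (hS x)]
    have := hκ _ (hS x)
    exact aux_int_abs _ _ _ fun y =>
      auxL_abs T _ (hW0 _) (hW1 _) c β hβ0 p hp C hC Jd s hs y id
  set K := C / (1 - β) with hKdef
  set e := e₁ + β * (K * ω) with hedef
  have hK0 : 0 ≤ K := (abs_nonneg _).trans (hK x)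
  -- closeness of one-step costs
  have hclose : ∀ x y a b, dist x y + dist a b ≤ 2 * δ →
      c x a + β * ∫ w, Jd w ∂(p x a) ≤ c y b + β * ∫ w, Jd w ∂(p y b) + e := by
    intro x y a b hd
    have h1 := (abs_le.1 (he₁ x y a b hd)).2
    have hpr := hp x a
    have hpr' := hp y b
    have h2 := aux_tv_integral (p x a) (p y b) Q hQ S hS Jd hJd K hK
    have h3 := mul_le_mul_of_nonneg_left (hω x y a b hd) hK0
    have h4 := (abs_le.1 (h2.trans h3)).2
    have h5 := mul_le_mul_of_nonneg_left h4 hβ0.le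
    rw [mul_sub] at h5
    simp only [hedef]
    linarith
  have hint : ∀ (J : X → ℝ) (M : ℝ), Measurable J → (∀ x, |J x| ≤ M) → ∀ x a,
      Integrable J (p x a) := fun J M hJ hM x a => by
    have := hp x a
    exact Integrable.of_bound hJ.aestronglyMeasurable M (Eventually.of_forall hM)
  have hcmp : ∀ (J J' : X → ℝ) (M M' s : ℝ), Measurable J → (∀ x, |J x| ≤ M) → Measurable J' →
      (∀ x, |J' x| ≤ M') → (∀ x, J x - J' x ≤ s) → ∀ x a,
      c x a + β * ∫ w, J w ∂(p x a) ≤ c x a + β * ∫ w, J' w ∂(p x a) + β * s := by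
    intro J J' M M' s hJ hM hJ' hM' hs x a
    have hpr := hp x a
    have h1 : ∫ w, J w ∂(p x a) ≤ ∫ w, (J' w + s) ∂(p x a) :=
      integral_mono (hint J M hJ hM x a) ((hint J' M' hJ' hM' x a).add (integrable_const s))
        fun w => by have := hs w; simp only; linarith
    rw [integral_add (hint J' M' hJ' hM' x a) (integrable_const s)] at h1
    simp only [integral_const, probReal_univ, smul_eq_mul, one_mul] at h1
    nlinarith
  -- cell averages
  have hLm : ∀ w u, Measurable fun y => auxL T w c β p Jd y u := by
    intro w u
    refine Finset.measurable_sum T fun b _ => Measurable.const_mul (Measurable.add ?_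
      (Measurable.const_mul ?_ _)) _
    · exact (hc.comp (Continuous.prodMk_left (u b))).measurable
    · exact ((aux_setwise_continuous (fun q : X × Y => p q.1 q.2) hp' hset Jd hJdm K hK).comp
        (Continuous.prodMk_left (u b))).measurable
  have hLi : ∀ z ∈ S, ∀ u, Integrable (fun y => auxL T (W z) c β p Jd y u) (κ z) := by
    intro z hz u
    have := hκ z hz
    exact Integrable.of_bound (hLm _ _).aestronglyMeasurable (β * K + C) (Eventually.of_forall
      fun y => auxL_abs T _ (hW0 _) (hW1 _) c β hβ0 p hp C hC Jd K hK y u)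
  have hdist : ∀ x y, Q y = Q x → dist x y ≤ 2 * δ := by
    intro x y hy
    have h1 := hQd x
    have h2 := hQd y
    have h3 := dist_triangle_right x y (Q x)
    rw [hy] at h2
    linarith
  have havg1 : ∀ x u, auxL T (W (Q x)) c β p Jd x u ≤
      ∫ y, auxL T (W (Q x)) c β p Jd y u ∂(κ (Q x)) + e := by
    intro x u
    have := hκ _ (hS x)
    have h1 : ∫ _y, (auxL T (W (Q x)) c β p Jd x u - e) ∂(κ (Q x)) ≤
        ∫ y, auxL T (W (Q x)) c β p Jd y u ∂(κ (Q x)) := by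
      refine integral_mono_ae (integrable_const _) (hLi _ (hS x) u) ?_
      filter_upwards [hκ' _ (hS x)] with y hy
      have := auxL_le T _ (hW0 (Q x)) (hW1 (Q x)) c β p Jd Jd x y u u e
        fun b => hclose x y _ _ (by rw [dist_self, add_zero]; exact hdist x y hy)
      linarith
    simp only [integral_const, probReal_univ, smul_eq_mul, one_mul] at h1
    linarith
  have havg2 : ∀ x u, ∫ y, auxL T (W (Q x)) c β p Jd y u ∂(κ (Q x)) ≤
      auxL T (W (Q x)) c β p Jd x u + e := by
    intro x u
    have := hκ _ (hS x)
    have h1 : ∫ y, auxL T (W (Q x)) c β p Jd y u ∂(κ (Q x)) ≤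
        ∫ _y, (auxL T (W (Q x)) c β p Jd x u + e) ∂(κ (Q x)) := by
      refine integral_mono_ae (hLi _ (hS x) u) (integrable_const _) ?_
      filter_upwards [hκ' _ (hS x)] with y hy
      exact auxL_le T _ (hW0 (Q x)) (hW1 (Q x)) c β p Jd Jd y x u u e
        fun b => hclose y x _ _ (by rw [dist_self, add_zero, dist_comm]; exact hdist x y hy)
    simp only [integral_const, probReal_univ, smul_eq_mul, one_mul] at h1
    linarith
  -- `Ji ≤ Jd + e / (1 - β)`
  have hA : Ji x - Jd x ≤ e / (1 - β) := by
    refine aux_contract (fun x => Ji x - Jd x) (Mi + K) β e hβ1 (fun x => ?_) (fun s hs x => ?_) x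
    · have h1 := (abs_le.1 (hMi x)).2
      have h2 := (abs_le.1 (hK x)).1
      linarith
    · have h1 := hJi x
      have h2 := auxL_le T _ (hW0 x) (hW1 x) c β p Ji Jd x x id id (β * s)
        fun b => hcmp Ji Jd Mi K s hJim hMi hJdm hK hs x _
      have h3 := havg1 x id
      rw [← hJd2 _ (hS x), ← hJd x, ← hWQ x] at h3
      linarith
  -- `Jd ≤ Js + 2 e / (1 - β)`
  have hB : Jd x - Js x ≤ (2 * e) / (1 - β) := by
    refine aux_contract (fun x => Jd x - Js x) (K + Ms) β (2 * e) hβ1 (fun x => ?_)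
      (fun s hs x => ?_) x
    · have h1 := (abs_le.1 (hMs x)).1
      have h2 := (abs_le.1 (hK x)).2
      linarith
    · have key : Jd x - β * s - 2 * e ≤ Js x := by
        rw [hJs x]
        refine le_ciInf fun a => ?_
        obtain ⟨b, hb, hab⟩ := hAb a
        have h1 : Jd x ≤ ∫ y, auxL T (W (Q x)) c β p Jd y (up b) ∂(κ (Q x)) := by
          rw [hJd x, hJd1 _ (hS x)]
          refine csInf_le ?_ ⟨b, hb, rfl⟩
          refine ⟨-(β * K + C), ?_⟩
          rintro _ ⟨a', -, rfl⟩
          have := hκ _ (hS x)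
          exact (abs_le.1 (aux_int_abs _ _ _ fun y =>
            auxL_abs T _ (hW0 _) (hW1 _) c β hβ0 p hp C hC Jd K hK y (up a'))).1
        have h2 := havg2 x (up b)
        rw [← hWQ x] at h1 h2
        have h3 := auxL_le T _ (hW0 x) (hW1 x) c β p Jd Jd x x (up b) (up a) e
          fun b' => hclose x x _ _ (by
            have := hupd b a b'
            rw [dist_comm b a] at this
            rw [dist_self]
            linarith)
        have h4 := auxL_le T _ (hW0 x) (hW1 x) c β p Jd Js x x (up a) (up a) (β * s)
          fun b => hcmp Jd Js K Ms s hJdm hK hJsm hMs hs x _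
        linarith
      linarith
  have : 3 * e / (1 - β) = e / (1 - β) + 2 * e / (1 - β) := by ring
  rw [this]
  linarith

/-- Discounted nonzero-sum Markov games: for every `ε > 0` there is `δ(ε) > 0` such that
for all `0 < δ ≤ δ(ε)`, any stationary perfect Nash equilibrium of the finite `δ`-model,
extended to `X` via the quantizer, is a stationary perfect `ε`-Nash equilibrium of the
original game. -/
theorem discounted_eps_nash
    -- compact metric state space
    (X : Type*) [MetricSpace X] [CompactSpace X] [Nonempty X]
    [MeasurableSpace X] [BorelSpace X]
    -- compact metric action spaces of the N players
    (N : ℕ) (A : Fin N → Type*) [∀ i, MetricSpace (A i)] [∀ i, CompactSpace (A i)]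
    [∀ i, Nonempty (A i)] [∀ i, MeasurableSpace (A i)] [∀ i, BorelSpace (A i)]
    -- bounded continuous one-stage cost functions
    (c : Fin N → X → (∀ i, A i) → ℝ)
    (hc : ∀ i, Continuous fun q : X × (∀ i, A i) => c i q.1 q.2)
    -- setwise continuous Borel stochastic kernel
    (p : X → (∀ i, A i) → Measure X)
    (hp_prob : ∀ x a, IsProbabilityMeasure (p x a))
    (hp_meas : ∀ D : Set X, MeasurableSet D →
      Measurable fun q : X × (∀ i, A i) => p q.1 q.2 D)
    (hp_setwise : ∀ D : Set X, MeasurableSet D →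
      Continuous fun q : X × (∀ i, A i) => (p q.1 q.2 D).toReal)
    -- discount factor
    (β : ℝ) (hβ0 : 0 < β) (hβ1 : β < 1)
    -- quantization data: finite δ-nets, nearest-point quantizer, weighting measures
    (Xd : ℝ → Finset X) (Q : ℝ → X → X) (Ad : ℝ → ∀ i, Finset (A i)) (ν : ℝ → Measure X)
    (hXd_net : ∀ δ > (0:ℝ), ∀ x : X, ∃ z ∈ Xd δ, dist x z ≤ δ)
    (hQ_mem : ∀ δ > (0:ℝ), ∀ x, Q δ x ∈ Xd δ)
    (hQ_near : ∀ δ > (0:ℝ), ∀ x, ∀ z ∈ Xd δ, dist x (Q δ x) ≤ dist x z)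
    (hQ_meas : ∀ δ > (0:ℝ), Measurable (Q δ))
    (hAd_net : ∀ δ > (0:ℝ), ∀ i, ∀ a : A i, ∃ b ∈ Ad δ i, dist a b ≤ δ)
    (hν_prob : ∀ δ > (0:ℝ), IsProbabilityMeasure (ν δ))
    (hν_pos : ∀ δ > (0:ℝ), ∀ z ∈ Xd δ, 0 < ν δ (Q δ ⁻¹' {z}))
    -- the quantization condition `lim_{δ→0} ω_δ(2δ) = 0`
    (hquant : Tendsto
      (fun δ : ℝ => sSup {v : ℝ | ∃ x y : X, ∃ a b : ∀ i, A i,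
        dist x y + dist a b ≤ 2 * δ ∧
        v = tvDist ((p x a).map (Q δ)) ((p y b).map (Q δ))})
      (𝓝[>] 0) (𝓝 0)) :
    -- conclusion: ε-Nash property of any finite-model stationary perfect equilibrium
    ∀ ε > (0:ℝ), ∃ δε > (0:ℝ), ∀ δ : ℝ, 0 < δ → δ ≤ δε →
      ∀ (π : (i : Fin N) → X → Measure (A i)) (Jd Js Ji : Fin N → X → ℝ),
      -- π is an (extended) stationary policy profile of the finite δ-model
      (∀ i x, IsProbabilityMeasure (π i x)) →
      (∀ i x, π i x (Ad δ i) = 1) →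
      (∀ i x, π i x = π i (Q δ x)) →
      -- Jd is the (extended) finite-model best-response value, and π is a stationary
      -- perfect Nash equilibrium of the finite δ-model: the minimum in the fixed-point
      -- equation is attained by π at every state of the net
      (∀ i x, Jd i x = Jd i (Q δ x)) →
      (∀ i, ∀ z ∈ Xd δ,
        Jd i z = sInf {v : ℝ | ∃ a ∈ Ad δ i, v =
          ∫ x, (∫ b, (c i x b + β * ∫ y, Jd i y ∂(p x b))
              ∂(Measure.pi (Function.update (fun j => π j z) i (Measure.dirac a))))
            ∂(cellMeasure (ν δ) (Q δ) z)}) →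
      (∀ i, ∀ z ∈ Xd δ,
        Jd i z =
          ∫ x, (∫ b, (c i x b + β * ∫ y, Jd i y ∂(p x b))
              ∂(Measure.pi fun j => π j z))
            ∂(cellMeasure (ν δ) (Q δ) z)) →
      -- Js is the (bounded) original-model discounted best-response value against
      -- the extended policies of the other players
      (∀ i, ∃ M : ℝ, ∀ x, |Js i x| ≤ M) →
      (∀ i, ∀ x : X,
        Js i x = ⨅ a : A i,
          ∫ b, (c i x b + β * ∫ y, Js i y ∂(p x b))
            ∂(Measure.pi (Function.update (fun j => π j x) i (Measure.dirac a)))) →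
      -- Ji is the (bounded) discounted cost of player i under the extended joint policy
      (∀ i, ∃ M : ℝ, ∀ x, |Ji i x| ≤ M) →
      (∀ i, ∀ x : X,
        Ji i x =
          ∫ b, (c i x b + β * ∫ y, Ji i y ∂(p x b))
            ∂(Measure.pi fun j => π j x)) →
      -- ε-Nash property
      ∀ i : Fin N, ∀ x : X, Ji i x ≤ Js i x + ε := by
  intro ε hε
  -- uniform constants
  have hcb : ∀ i, ∃ C : ℝ, ∀ x a, |c i x a| ≤ C := by
    intro i
    obtain ⟨C, hC⟩ := isCompact_univ.exists_bound_of_continuousOn (hc i).continuousOn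
    exact ⟨C, fun x a => hC (x, a) (Set.mem_univ _)⟩
  choose C0 hC0 using hcb
  set C : ℝ := ∑ i, |C0 i| with hCdef
  have hC : ∀ i x a, |c i x a| ≤ C := fun i x a =>
    (hC0 i x a).trans ((le_abs_self _).trans
      (Finset.single_le_sum (f := fun i => |C0 i|) (fun _ _ => abs_nonneg _) (Finset.mem_univ i)))
  have hCnn : 0 ≤ C := Finset.sum_nonneg fun _ _ => abs_nonneg _
  have h1β : 0 < 1 - β := by linarith
  set K : ℝ := C / (1 - β) with hKdef
  have hK : 0 ≤ K := div_nonneg hCnn h1β.le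
  -- choose tolerances
  set e₁ : ℝ := ε * (1 - β) / 6 with he₁def
  have he₁ : 0 < e₁ := by positivity
  set ω₀ : ℝ := ε * (1 - β) / (6 * (K + 1)) with hω₀def
  have hω₀ : 0 < ω₀ := by positivity
  have huc : ∃ η > (0:ℝ), ∀ i x y (a b : ∀ i, A i), dist x y + dist a b < η →
      |c i x a - c i y b| ≤ e₁ := by
    have h1 : ∀ i, ∃ η > (0:ℝ), ∀ x y (a b : ∀ i, A i), dist x y + dist a b < η →
        |c i x a - c i y b| ≤ e₁ := by
      intro i
      have hu := CompactSpace.uniformContinuous_of_continuous (hc i)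
      obtain ⟨η, hη, h⟩ := Metric.uniformContinuous_iff.1 hu e₁ he₁
      refine ⟨η, hη, fun x y a b hd => ?_⟩
      have h2 : dist ((x, a) : X × (∀ i, A i)) (y, b) < η := by
        rw [Prod.dist_eq]
        have g1 := dist_nonneg (x := x) (y := y)
        have g2 := dist_nonneg (x := a) (y := b)
        exact max_lt (by simp only; linarith) (by simp only; linarith)
      have h3 := h h2
      rw [Real.dist_eq] at h3
      exact h3.le
    choose η hη h using h1
    by_cases hN : Nonempty (Fin N)
    · refine ⟨Finset.univ.inf' Finset.univ_nonempty η,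
        (Finset.lt_inf'_iff _).2 fun i _ => hη i, fun i x y a b hd => h i x y a b ?_⟩
      exact hd.trans_le (Finset.inf'_le _ (Finset.mem_univ i))
    · exact ⟨1, one_pos, fun i => (hN ⟨i⟩).elim⟩
  obtain ⟨η, hη, hηc⟩ := huc
  have hev := hquant.eventually (eventually_lt_nhds hω₀)
  obtain ⟨δ₀, hδ₀, hδ₀'⟩ := mem_nhdsGT_iff_exists_Ioo_subset.1 hev
  refine ⟨min (δ₀ / 2) (η / 3), lt_min (half_pos hδ₀) (by positivity), ?_⟩
  intro δ hδ hδle π Jd Js Ji hπ hπS hπQ hJd hJd1 hJd2 hJsb hJs hJib hJi i x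
  have hδ1 : δ < δ₀ := lt_of_le_of_lt (hδle.trans (min_le_left _ _)) (half_lt_self hδ₀)
  have hδ2 : 2 * δ < η := by
    have := hδle.trans (min_le_right _ _)
    linarith
  have hω := hδ₀' ⟨hδ, hδ1⟩
  simp only [Set.mem_ofPred_eq] at hω
  obtain ⟨Ms, hMs⟩ := hJsb i
  obtain ⟨Mi, hMi⟩ := hJib i
  have hprobν := hν_prob δ hδ
  have hQm := hQ_meas δ hδ
  have hmain := aux_core (X := X) (Y := ∀ j, A j) (B := A i)
    (fun a b => Function.update b i a)
    (fun b => continuous_const.update i continuous_id)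
    (fun a a' b => (dist_pi_le_iff dist_nonneg).2 fun j => by
      by_cases h : j = i
      · subst h; simp
      · simp [Function.update_of_ne h])
    (c i) (hc i) C (hC i) p hp_prob hp_setwise β hβ0 hβ1 (Xd δ) (Q δ) (hQ_mem δ hδ) hQm
    δ hδ (fun x => by
      obtain ⟨z, hz, hd⟩ := hXd_net δ hδ x
      exact (hQ_near δ hδ x z hz).trans hd)
    (Ad δ i) (hAd_net δ hδ i) (cellMeasure (ν δ) (Q δ))
    (fun z hz => ⟨by
      simp only [cellMeasure, Measure.smul_apply, Measure.restrict_apply_univ, smul_eq_mul]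
      exact ENNReal.inv_mul_cancel (hν_pos δ hδ z hz).ne' (measure_ne_top _ _)⟩)
    (fun z hz => by
      refine Measure.ae_smul_measure ?_ _
      exact ae_restrict_mem (hQm (MeasurableSet.singleton z)))
    e₁ ω₀ (fun x y a b hd => hηc i x y a b (lt_of_le_of_lt hd hδ2))
    (fun x y a b hd => by
      refine le_trans ?_ hω.le
      refine le_csSup ⟨2, ?_⟩ ⟨x, y, a, b, hd, rfl⟩
      rintro _ ⟨x, y, a, b, -, rfl⟩
      have := hp_prob x a
      have := hp_prob y b
      have := Measure.isProbabilityMeasure_map (μ := p x a) hQm.aemeasurable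
      have := Measure.isProbabilityMeasure_map (μ := p y b) hQm.aemeasurable
      exact aux_tv_le_two _ _)
    (Fintype.piFinset (Ad δ)) (fun x b => (Measure.pi fun j => π j x).real {b})
    (fun x b => measureReal_nonneg)
    (fun x => by
      have := hπ
      rw [sum_measureReal_singleton, Measure.real, aux_pi_supp _ _ (fun j => hπS j x)]
      simp)
    (fun x => by
      have : (fun j => π j x) = fun j => π j (Q δ x) := funext fun j => hπQ j x
      simp only [this])
    (Jd i) (Js i) (Ji i) (hJd i)
    (fun z hz => by
      have := hπ
      rw [hJd1 i z hz]
      congr 1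
      ext v
      refine exists_congr fun a => and_congr_right fun _ => ?_
      simp only [aux_integral_update (fun j => π j z) (Ad δ) (fun j => hπS j z) i a]
      rfl)
    (fun z hz => by
      have := hπ
      rw [hJd2 i z hz]
      simp only [aux_integral_fin _ _ (aux_pi_supp (fun j => π j z) (Ad δ) (fun j => hπS j z))]
      rfl)
    Ms hMs
    (fun x => by
      have := hπ
      rw [hJs i x]
      simp only [aux_integral_update (fun j => π j x) (Ad δ) (fun j => hπS j x) i]
      rfl)
    Mi hMi
    (fun x => by
      have := hπ
      rw [hJi i x, aux_integral_fin _ _ (aux_pi_supp (fun j => π j x) (Ad δ) (fun j => hπS j x))]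
      rfl) x
  refine hmain.trans (add_le_add le_rfl ?_)
  rw [div_le_iff₀ h1β, ← hKdef]
  have hKω : K * ω₀ ≤ ε * (1 - β) / 6 := by
    have : (K + 1) * ω₀ = ε * (1 - β) / 6 := by
      rw [hω₀def]; field_simp
    nlinarith
  have hKω0 : 0 ≤ K * ω₀ := by positivity
  have : β * (K * ω₀) ≤ K * ω₀ := by nlinarith
  have : 0 < ε * (1 - β) := by positivity
  rw [he₁def]
  linarith

end
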